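/- Let X be a coded shift with unique representation G = {g_1, g_2, …}, and let φ : X → ℝ be locally constant. Suppose there exists an equilibrium state μ_φ of φ with μ_φ(X_seq) = 1. Then P_top(X,φ) = P_seq(φ) = lim_{m→∞} P_top(X_m, φ|_{X_m}). -/

import Mathlib

open Filter MeasureTheory Topology
open scoped BigOperators ENNReal

noncomputable section

namespace PaperStmt

/-- The full two-sided shift: bi-infinite sequences over the alphabet `Fin d`. -/
abbrev FullShift (d : ℕ) := ℤ → Fin d

/-- The (left) shift map `f(x)_k = x_{k+1}`. -/
def shift (d : ℕ) : FullShift d → FullShift d := fun x k => x (k + 1)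

/-- A (two-sided) shift space: a nonempty closed shift-invariant subset. -/
def IsShiftSpace {d : ℕ} (X : Set (FullShift d)) : Prop :=
  X.Nonempty ∧ IsClosed X ∧ shift d '' X = X

/-- The cylinder at position `0` determined by a word `w` of length `n`. -/
def cyl {d n : ℕ} (w : Fin n → Fin d) : Set (FullShift d) :=
  {x | ∀ i : Fin n, x ((i : ℕ) : ℤ) = w i}

/-- The language of `X` in length `n`: words of length `n` occurring in elements of `X`
(at position `0`; for shift-invariant `X` this is occurrence anywhere). -/
def langSet {d : ℕ} (X : Set (FullShift d)) (n : ℕ) : Set (Fin n → Fin d) :=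
  {w | (X ∩ cyl w).Nonempty}

/-- Birkhoff sum `S_n φ`. -/
def birkhoff {d : ℕ} (φ : FullShift d → ℝ) (n : ℕ) (x : FullShift d) : ℝ :=
  ∑ k ∈ Finset.range n, φ ((shift d)^[k] x)

open Classical in
/-- The `n`-th partition function `Z_n(φ)` of `X`. -/
def Zfun {d : ℕ} (X : Set (FullShift d)) (φ : FullShift d → ℝ) (n : ℕ) : ℝ :=
  ∑ w : Fin n → Fin d,
    if (X ∩ cyl w).Nonempty then Real.exp (sSup (birkhoff φ n '' (X ∩ cyl w))) else 0

/-- Topological pressure `P_top(X,φ) = lim (1/n) log Z_n(φ) = inf_n (1/n) log Z_n(φ)`. -/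
def pressure {d : ℕ} (X : Set (FullShift d)) (φ : FullShift d → ℝ) : ℝ :=
  ⨅ n : ℕ, (1 / (n + 1 : ℝ)) * Real.log (Zfun X φ (n + 1))

/-- Topological entropy `h_top(X) = inf_n (1/n) log |L(X,n)|`. -/
def entTop {d : ℕ} (X : Set (FullShift d)) : ℝ :=
  ⨅ n : ℕ, (1 / (n + 1 : ℝ)) * Real.log ((langSet X (n + 1)).ncard : ℝ)

/-- The shift-invariant Borel probability measures giving `X` full measure. -/
def InvProb {d : ℕ} (X : Set (FullShift d)) : Set (Measure (FullShift d)) :=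
  {μ | IsProbabilityMeasure μ ∧ μ.map (shift d) = μ ∧ μ X = 1}

/-- Measure-theoretic (Kolmogorov–Sinai) entropy of an invariant measure,
computed via cylinder sets: `h_μ = lim -(1/n) Σ_{|w|=n} μ[w] log μ[w]`. -/
def mEnt {d : ℕ} (μ : Measure (FullShift d)) : ℝ :=
  Filter.liminf
    (fun n : ℕ => (1 / (n + 1 : ℝ)) *
      ∑ w : Fin (n + 1) → Fin d, Real.negMulLog (μ (cyl w)).toReal)
    Filter.atTop

/-- The free energy `h_μ(f) + ∫ φ dμ` of an invariant measure. -/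
def freeEnergy {d : ℕ} (μ : Measure (FullShift d)) (φ : FullShift d → ℝ) : ℝ :=
  mEnt μ + ∫ x, φ x ∂μ

/-- `sup { ∫ φ dμ : μ ∈ M_X }`. -/
def intAvg {d : ℕ} (X : Set (FullShift d)) (φ : FullShift d → ℝ) : ℝ :=
  sSup {r | ∃ μ ∈ InvProb X, r = ∫ x, φ x ∂μ}

/-- `μ` is an equilibrium state of `φ` on `X`. -/
def IsEqState {d : ℕ} (X : Set (FullShift d)) (φ : FullShift d → ℝ)
    (μ : Measure (FullShift d)) : Prop :=
  μ ∈ InvProb X ∧ freeEnergy μ φ = pressure X φ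

/-- `p : ℤ → ℤ` parses `x` into consecutive generator blocks from `𝒢`:
the block of `x` from `p j` to `p (j+1) - 1` is a generator, for every `j`. -/
def IsParsing {d : ℕ} (𝒢 : Set (List (Fin d))) (x : FullShift d) (p : ℤ → ℤ) : Prop :=
  StrictMono p ∧ ∀ j : ℤ, ∃ g ∈ 𝒢,
    p (j + 1) = p j + g.length ∧ ∀ (l : ℕ) (hl : l < g.length), x (p j + l) = g[l]

/-- `X_seq`: the set of bi-infinite concatenations of generators. -/
def Xseq {d : ℕ} (𝒢 : Set (List (Fin d))) : Set (FullShift d) :=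
  {x | ∃ p : ℤ → ℤ, IsParsing 𝒢 x p}

/-- The coded shift generated by `𝒢`: the closure of `X_seq`. -/
def codedShift {d : ℕ} (𝒢 : Set (List (Fin d))) : Set (FullShift d) :=
  closure (Xseq 𝒢)

/-- `𝒢` is a unique representation: every `x ∈ X_seq` admits exactly one parsing
into generator blocks (i.e. the set of cut points is uniquely determined). -/
def UniqueRep {d : ℕ} (𝒢 : Set (List (Fin d))) : Prop :=
  ∀ (x : FullShift d) (p q : ℤ → ℤ),
    IsParsing 𝒢 x p → IsParsing 𝒢 x q → Set.range p = Set.range q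

/-- `P_seq(φ) = sup { h_μ + ∫φ dμ : μ ∈ M_X, μ(Xs) = 1 }`. -/
def PseqOf {d : ℕ} (X Xs : Set (FullShift d)) (φ : FullShift d → ℝ) : ℝ :=
  sSup {r | ∃ μ ∈ InvProb X, μ Xs = 1 ∧ r = freeEnergy μ φ}

/-- `P_lim(φ) = sup { h_μ + ∫φ dμ : μ ∈ M_X, μ(X \ Xs) = 1 }`. -/
def PlimOf {d : ℕ} (X Xs : Set (FullShift d)) (φ : FullShift d → ℝ) : ℝ :=
  sSup {r | ∃ μ ∈ InvProb X, μ (X \ Xs) = 1 ∧ r = freeEnergy μ φ}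

/-- `φ` has strict full sequential pressure: `P_seq(φ) > P_lim(φ)`. -/
def StrictFSP {d : ℕ} (X Xs : Set (FullShift d)) (φ : FullShift d → ℝ) : Prop :=
  PlimOf X Xs φ < PseqOf X Xs φ

/-- `φ ∈ FSSP(X)`: `φ` lies in the sup-norm closure (within `C(X,ℝ)`) of the
set of continuous potentials with strict full sequential pressure. -/
def InFSSP {d : ℕ} (X Xs : Set (FullShift d)) (φ : FullShift d → ℝ) : Prop :=
  ∀ ε : ℝ, 0 < ε → ∃ ψ : FullShift d → ℝ, ContinuousOn ψ X ∧
    (∀ x ∈ X, |φ x - ψ x| ≤ ε) ∧ StrictFSP X Xs ψ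

/-- The invariant probability measure equidistributed on the (period-`ℓ`) orbit of `y`. -/
def periodicMeasure {d : ℕ} (y : FullShift d) (ℓ : ℕ) : Measure (FullShift d) :=
  (ℓ : ℝ≥0∞)⁻¹ • ∑ k ∈ Finset.range ℓ, Measure.dirac ((shift d)^[k] y)

/-- `y` is periodic with period `ℓ ≥ 1`. -/
def IsPeriodicOf {d : ℕ} (y : FullShift d) (ℓ : ℕ) : Prop :=
  1 ≤ ℓ ∧ (shift d)^[ℓ] y = y

section Dynamics

variable {d : ℕ}

lemma iterate_shift_apply (n : ℕ) (x : FullShift d) (i : ℤ) :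
    (shift d)^[n] x i = x (i + n) := by
  induction n generalizing x i with
  | zero => simp
  | succ n ih =>
    rw [Function.iterate_succ_apply, ih]
    simp only [shift]
    congr 1
    push_cast
    ring

lemma continuous_shift : Continuous (shift d) :=
  continuous_pi fun k => continuous_apply (k + 1)

lemma measurable_shift : Measurable (shift d) :=
  measurable_pi_lambda _ fun k => measurable_pi_apply (k + 1)

lemma measurableSet_cyl {n : ℕ} (w : Fin n → Fin d) : MeasurableSet (cyl w) := by
  have : cyl w = ⋂ i : Fin n, (fun x : FullShift d => x ((i : ℕ) : ℤ)) ⁻¹' {w i} := by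
    ext x; simp [cyl]
  rw [this]
  exact MeasurableSet.iInter fun i => measurable_pi_apply _ (measurableSet_singleton _)

lemma birkhoff_add (φ : FullShift d → ℝ) (m n : ℕ) (x : FullShift d) :
    birkhoff φ (m + n) x = birkhoff φ m x + birkhoff φ n ((shift d)^[m] x) := by
  simp only [birkhoff, Finset.sum_range_add]
  congr 1
  refine Finset.sum_congr rfl fun k _ => ?_
  rw [← Function.iterate_add_apply, add_comm]

lemma abs_birkhoff_le {X : Set (FullShift d)} (hX : Set.MapsTo (shift d) X X)
    {φ : FullShift d → ℝ} {K : ℝ} (hK : ∀ x ∈ X, |φ x| ≤ K) (n : ℕ) {x : FullShift d}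
    (hx : x ∈ X) : |birkhoff φ n x| ≤ n * K := by
  calc |birkhoff φ n x| ≤ ∑ k ∈ Finset.range n, |φ ((shift d)^[k] x)| :=
        Finset.abs_sum_le_sum_abs _ _
    _ ≤ ∑ _k ∈ Finset.range n, K := Finset.sum_le_sum fun k _ => hK _ (hX.iterate k hx)
    _ = n * K := by simp

end Dynamics

section Pressure

variable {d : ℕ} {X : Set (FullShift d)} {φ : FullShift d → ℝ} {K : ℝ}

lemma bddAbove_birkhoff_image (hX : Set.MapsTo (shift d) X X) (hK : ∀ x ∈ X, |φ x| ≤ K)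
    {n : ℕ} (S : Set (FullShift d)) : BddAbove (birkhoff φ n '' (X ∩ S)) := by
  refine ⟨n * K, ?_⟩
  rintro _ ⟨x, hx, rfl⟩
  exact (abs_le.1 (abs_birkhoff_le hX hK n hx.1)).2

/-- The contribution of the word `w` to the partition function. -/
def wordWeight (X : Set (FullShift d)) (φ : FullShift d → ℝ) {n : ℕ} (w : Fin n → Fin d) : ℝ :=
  open Classical in
  if (X ∩ cyl w).Nonempty then Real.exp (sSup (birkhoff φ n '' (X ∩ cyl w))) else 0

lemma Zfun_eq_sum_wordWeight (n : ℕ) :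
    Zfun X φ n = ∑ w : Fin n → Fin d, wordWeight X φ w := rfl

lemma wordWeight_nonneg {n : ℕ} (w : Fin n → Fin d) : 0 ≤ wordWeight X φ w := by
  unfold wordWeight
  split_ifs
  · positivity
  · exact le_rfl

lemma exp_birkhoff_le_wordWeight (hX : Set.MapsTo (shift d) X X) (hK : ∀ x ∈ X, |φ x| ≤ K)
    {n : ℕ} {w : Fin n → Fin d} {x : FullShift d} (hx : x ∈ X) (hw : x ∈ cyl w) :
    Real.exp (birkhoff φ n x) ≤ wordWeight X φ w := by
  unfold wordWeight
  rw [if_pos ⟨x, hx, hw⟩]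
  exact Real.exp_le_exp.2
    (le_csSup (bddAbove_birkhoff_image hX hK _) (Set.mem_image_of_mem _ ⟨hx, hw⟩))

lemma wordWeight_mono {Y : Set (FullShift d)} (hYX : Y ⊆ X) (hX : Set.MapsTo (shift d) X X)
    (hK : ∀ x ∈ X, |φ x| ≤ K) {n : ℕ} (w : Fin n → Fin d) :
    wordWeight Y φ w ≤ wordWeight X φ w := by
  by_cases h : (Y ∩ cyl w).Nonempty
  · have hsub : Y ∩ cyl w ⊆ X ∩ cyl w := Set.inter_subset_inter_left _ hYX
    rw [wordWeight, wordWeight, if_pos h, if_pos (h.mono hsub)]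
    exact Real.exp_le_exp.2 (csSup_le_csSup (bddAbove_birkhoff_image hX hK _) (h.image _)
      (Set.image_mono hsub))
  · rw [wordWeight, if_neg h]
    exact wordWeight_nonneg w

lemma exp_le_Zfun (hX : Set.MapsTo (shift d) X X) (hK : ∀ x ∈ X, |φ x| ≤ K)
    (hne : X.Nonempty) (n : ℕ) : Real.exp (-(n * K)) ≤ Zfun X φ n := by
  obtain ⟨x, hx⟩ := hne
  let w : Fin n → Fin d := fun i => x ((i : ℕ) : ℤ)
  calc Real.exp (-(n * K)) ≤ Real.exp (birkhoff φ n x) :=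
        Real.exp_le_exp.2 (abs_le.1 (abs_birkhoff_le hX hK n hx)).1
    _ ≤ wordWeight X φ w := exp_birkhoff_le_wordWeight hX hK hx fun _ => rfl
    _ ≤ Zfun X φ n := by
        rw [Zfun_eq_sum_wordWeight]
        exact Finset.single_le_sum (fun w _ => wordWeight_nonneg w) (Finset.mem_univ w)

lemma Zfun_pos (hX : Set.MapsTo (shift d) X X) (hK : ∀ x ∈ X, |φ x| ≤ K)
    (hne : X.Nonempty) (n : ℕ) : 0 < Zfun X φ n :=
  (Real.exp_pos _).trans_le (exp_le_Zfun hX hK hne n)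

lemma wordWeight_append_le (hX : Set.MapsTo (shift d) X X) (hK : ∀ x ∈ X, |φ x| ≤ K)
    {m n : ℕ} (u : Fin m → Fin d) (v : Fin n → Fin d) :
    wordWeight X φ (Fin.append u v) ≤ wordWeight X φ u * wordWeight X φ v := by
  by_cases h : (X ∩ cyl (Fin.append u v)).Nonempty
  · have hu : ∀ x ∈ cyl (Fin.append u v), x ∈ cyl u := by
      intro x hx i
      simpa using hx (Fin.castAdd n i)
    have hv : ∀ x ∈ cyl (Fin.append u v), (shift d)^[m] x ∈ cyl v := by
      intro x hx i
      have := hx (Fin.natAdd m i)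
      rw [Fin.append_right] at this
      rw [← this, iterate_shift_apply]
      simp [add_comm]
    obtain ⟨x₀, hx₀, hw₀⟩ := h
    have hu₀ : (X ∩ cyl u).Nonempty := ⟨x₀, hx₀, hu _ hw₀⟩
    have hv₀ : (X ∩ cyl v).Nonempty := ⟨_, hX.iterate m hx₀, hv _ hw₀⟩
    rw [wordWeight, wordWeight, wordWeight, if_pos ⟨x₀, hx₀, hw₀⟩, if_pos hu₀, if_pos hv₀,
      ← Real.exp_add]
    refine Real.exp_le_exp.2 (csSup_le ⟨_, Set.mem_image_of_mem _ ⟨hx₀, hw₀⟩⟩ ?_)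
    rintro _ ⟨x, ⟨hx, hw⟩, rfl⟩
    rw [birkhoff_add]
    exact add_le_add
      (le_csSup (bddAbove_birkhoff_image hX hK _) (Set.mem_image_of_mem _ ⟨hx, hu _ hw⟩))
      (le_csSup (bddAbove_birkhoff_image hX hK _)
        (Set.mem_image_of_mem _ ⟨hX.iterate m hx, hv _ hw⟩))
  · rw [wordWeight, if_neg h]
    exact mul_nonneg (wordWeight_nonneg u) (wordWeight_nonneg v)

lemma Zfun_add_le (hX : Set.MapsTo (shift d) X X) (hK : ∀ x ∈ X, |φ x| ≤ K) (m n : ℕ) :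
    Zfun X φ (m + n) ≤ Zfun X φ m * Zfun X φ n := by
  simp only [Zfun_eq_sum_wordWeight]
  rw [← (Fin.appendEquiv m n).sum_comp, Finset.sum_mul_sum, ← Finset.univ_product_univ,
    Finset.sum_product]
  exact Finset.sum_le_sum fun u _ => Finset.sum_le_sum fun v _ =>
    wordWeight_append_le hX hK u v

lemma neg_le_log_Zfun_div (hX : Set.MapsTo (shift d) X X) (hK : ∀ x ∈ X, |φ x| ≤ K)
    (hne : X.Nonempty) (n : ℕ) : -K ≤ (1 / (n + 1 : ℝ)) * Real.log (Zfun X φ (n + 1)) := by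
  have h := (Real.le_log_iff_exp_le (Zfun_pos hX hK hne (n + 1))).2
    (exp_le_Zfun hX hK hne (n + 1))
  rw [one_div, ← div_eq_inv_mul, le_div_iff₀ (by positivity)]
  push_cast at h
  linarith

lemma pressure_mono {Y : Set (FullShift d)} (hYX : Y ⊆ X) (hY : Set.MapsTo (shift d) Y Y)
    (hX : Set.MapsTo (shift d) X X) (hK : ∀ x ∈ X, |φ x| ≤ K) (hne : Y.Nonempty) :
    pressure Y φ ≤ pressure X φ := by
  have hKY : ∀ x ∈ Y, |φ x| ≤ K := fun x hx => hK x (hYX hx)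
  refine ciInf_mono ⟨-K, ?_⟩ fun n => ?_
  · rintro _ ⟨n, rfl⟩
    exact neg_le_log_Zfun_div hY hKY hne n
  · refine mul_le_mul_of_nonneg_left ?_ (by positivity)
    exact Real.log_le_log (Zfun_pos hY hKY hne _)
      (Finset.sum_le_sum fun w _ => wordWeight_mono hYX hX hK w)

lemma tendsto_pressure (hX : Set.MapsTo (shift d) X X) (hK : ∀ x ∈ X, |φ x| ≤ K)
    (hne : X.Nonempty) :
    Tendsto (fun n : ℕ => (1 / (n + 1 : ℝ)) * Real.log (Zfun X φ (n + 1))) atTop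
      (𝓝 (pressure X φ)) := by
  have hsub : Subadditive fun n => Real.log (Zfun X φ n) := fun m n => by
    rw [← Real.log_mul (Zfun_pos hX hK hne m).ne' (Zfun_pos hX hK hne n).ne']
    exact Real.log_le_log (Zfun_pos hX hK hne _) (Zfun_add_le hX hK m n)
  have hsucc : ∀ n : ℕ, (1 / (n + 1 : ℝ)) * Real.log (Zfun X φ (n + 1)) =
      Real.log (Zfun X φ (n + 1)) / ((n + 1 : ℕ) : ℝ) := fun n => by
    push_cast
    ring
  have hbdd : BddBelow (Set.range fun n : ℕ => Real.log (Zfun X φ n) / (n : ℝ)) := by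
    refine ⟨min (-K) 0, ?_⟩
    rintro _ ⟨n, rfl⟩
    cases n with
    | zero => simp
    | succ n =>
      refine (min_le_left _ _).trans ?_
      have := neg_le_log_Zfun_div hX hK hne n
      rwa [hsucc] at this
  have hlim : hsub.lim = pressure X φ := by
    unfold Subadditive.lim pressure
    rw [iInf]
    congr 1
    ext r
    constructor
    · rintro ⟨n, hn, rfl⟩
      obtain ⟨n, rfl⟩ := Nat.exists_eq_add_of_le' (Set.mem_Ici.1 hn)
      exact ⟨n, hsucc n⟩
    · rintro ⟨n, rfl⟩
      exact ⟨n + 1, by simp, (hsucc n).symm⟩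
  rw [← hlim]
  refine ((tendsto_add_atTop_iff_nat 1).2 (hsub.tendsto_lim hbdd)).congr fun n => ?_
  exact (hsucc n).symm

end Pressure

section Gibbs

variable {d : ℕ} {μ : Measure (FullShift d)} [IsProbabilityMeasure μ]

lemma pairwise_disjoint_cyl (n : ℕ) :
    Pairwise (Function.onFun Disjoint fun w : Fin n → Fin d => cyl w) := by
  intro u v huv
  refine Set.disjoint_left.2 fun x hu hv => huv (funext fun i => ?_)
  rw [← hu i, ← hv i]

lemma iUnion_cyl (n : ℕ) : ⋃ w : Fin n → Fin d, cyl w = Set.univ :=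
  Set.eq_univ_of_forall fun x => Set.mem_iUnion.2 ⟨fun i => x ((i : ℕ) : ℤ), fun _ => rfl⟩

lemma sum_measureReal_cyl (n : ℕ) : ∑ w : Fin n → Fin d, μ.real (cyl w) = 1 := by
  have h := integral_iUnion_fintype (μ := μ) (f := fun _ => (1 : ℝ)) measurableSet_cyl
    (pairwise_disjoint_cyl n) (fun _ => (integrable_const _).integrableOn)
  simpa [iUnion_cyl] using h.symm

/-- Pointwise form of the Gibbs inequality. -/
lemma negMulLog_add_mul_le {q a S : ℝ} (hq : 0 < q) (hS : 0 < S) :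
    Real.negMulLog q + q * a ≤ q * Real.log S + (Real.exp a / S - q) := by
  have h := Real.log_le_sub_one_of_pos (x := Real.exp a / (q * S)) (by positivity)
  rw [Real.log_div (Real.exp_pos a).ne' (by positivity), Real.log_exp,
    Real.log_mul hq.ne' hS.ne'] at h
  have h' := mul_le_mul_of_nonneg_left h hq.le
  have e : q * (Real.exp a / (q * S) - 1) = Real.exp a / S - q := by
    field_simp
  rw [e] at h'
  rw [Real.negMulLog]
  linarith

/-- Each cylinder of positive measure contains a point of a given conull set at which `f` is
at least its average over the cylinder, and these points realise the Gibbs inequality. -/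
lemma exists_points_gibbs {f : FullShift d → ℝ} (hf : Integrable f μ) {Y : Set (FullShift d)}
    (hY : μ Yᶜ = 0) (n : ℕ) :
    ∃ (W : Finset (Fin n → Fin d)) (x : (Fin n → Fin d) → FullShift d),
      W.Nonempty ∧ (∀ w ∈ W, x w ∈ Y ∧ x w ∈ cyl w) ∧
      ∑ w : Fin n → Fin d, Real.negMulLog (μ (cyl w)).toReal + ∫ y, f y ∂μ
        ≤ Real.log (∑ w ∈ W, Real.exp (f (x w))) := by
  classical
  let W : Finset (Fin n → Fin d) := Finset.univ.filter fun w => μ (cyl w) ≠ 0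
  have hpt : ∀ w : Fin n → Fin d, ∃ x, w ∈ W →
      (x ∈ Y ∧ x ∈ cyl w) ∧ ∫ y in cyl w, f y ∂μ ≤ μ.real (cyl w) * f x := by
    intro w
    by_cases hw : w ∈ W
    · have hw0 : μ (cyl w) ≠ 0 := (Finset.mem_filter.1 hw).2
      have hnull : μ.restrict (cyl w) (Yᶜ ∪ (cyl w)ᶜ) = 0 := by
        refine measure_union_null ?_ ?_
        · exact le_antisymm ((Measure.restrict_apply_le _ _).trans hY.le) bot_le
        · rw [Measure.restrict_apply (measurableSet_cyl w).compl]
          simp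
      obtain ⟨x, hx, hle⟩ := exists_notMem_null_average_le (μ := μ.restrict (cyl w)) (f := f)
        (by simpa using hw0) hf.integrableOn hnull
      refine ⟨x, fun _ => ⟨by simpa using hx, ?_⟩⟩
      rw [setAverage_eq, smul_eq_mul] at hle
      have hpos : 0 < μ.real (cyl w) := ENNReal.toReal_pos hw0 (measure_ne_top _ _)
      rwa [inv_mul_le_iff₀ hpos] at hle
    · obtain ⟨x⟩ : Nonempty (FullShift d) := nonempty_of_isProbabilityMeasure μ
      exact ⟨x, fun h => absurd h hw⟩
  choose x hx using hpt
  have hzero : ∀ w, w ∉ W → μ (cyl w) = 0 := fun w hw => by simpa [W] using hw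
  have hsumW : ∑ w ∈ W, μ.real (cyl w) = 1 := by
    rw [← sum_measureReal_cyl (μ := μ) n]
    exact Finset.sum_subset (Finset.subset_univ _) fun w _ hw => by
      simp [Measure.real, hzero w hw]
  have hWne : W.Nonempty := by
    by_contra h
    simp [Finset.not_nonempty_iff_eq_empty.1 h] at hsumW
  refine ⟨W, x, hWne, fun w hw => (hx w hw).1, ?_⟩
  set S := ∑ w ∈ W, Real.exp (f (x w)) with hS
  have hSpos : 0 < S := Finset.sum_pos (fun w _ => Real.exp_pos _) hWne
  have hint : ∫ y, f y ∂μ = ∑ w ∈ W, ∫ y in cyl w, f y ∂μ := by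
    have h := integral_iUnion_fintype (μ := μ) (f := f) measurableSet_cyl
      (pairwise_disjoint_cyl n) (fun _ => hf.integrableOn)
    rw [iUnion_cyl, setIntegral_univ] at h
    rw [h]
    exact (Finset.sum_subset (Finset.subset_univ _) fun w _ hw =>
      setIntegral_measure_zero _ (hzero w hw)).symm
  have hent : ∑ w : Fin n → Fin d, Real.negMulLog (μ (cyl w)).toReal
      = ∑ w ∈ W, Real.negMulLog (μ.real (cyl w)) :=
    (Finset.sum_subset (Finset.subset_univ _) fun w _ hw => by
      simp [hzero w hw]).symm
  rw [hint, hent, ← Finset.sum_add_distrib]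
  calc ∑ w ∈ W, (Real.negMulLog (μ.real (cyl w)) + ∫ y in cyl w, f y ∂μ)
      ≤ ∑ w ∈ W, (μ.real (cyl w) * Real.log S
          + (Real.exp (f (x w)) / S - μ.real (cyl w))) := by
        refine Finset.sum_le_sum fun w hw => ?_
        have hpos : 0 < μ.real (cyl w) :=
          ENNReal.toReal_pos (Finset.mem_filter.1 hw).2 (measure_ne_top _ _)
        exact (add_le_add_right (hx w hw).2 _).trans (negMulLog_add_mul_le hpos hSpos)
    _ = Real.log S := by
        rw [Finset.sum_add_distrib, Finset.sum_sub_distrib, ← Finset.sum_mul, hsumW,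
          ← Finset.sum_div, ← hS, div_self hSpos.ne']
        ring

end Gibbs

section Parsing

variable {d : ℕ}

/-- The letters of `x` on `[a, b)` form a word of `𝒢`. -/
def IsBlock (𝒢 : Set (List (Fin d))) (x : FullShift d) (a b : ℤ) : Prop :=
  ∃ g ∈ 𝒢, b = a + g.length ∧ ∀ (l : ℕ) (hl : l < g.length), x (a + l) = g[l]

lemma IsBlock.mono {𝒢 ℋ : Set (List (Fin d))} (h : 𝒢 ⊆ ℋ) {x : FullShift d} {a b : ℤ}
    (hb : IsBlock 𝒢 x a b) : IsBlock ℋ x a b :=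
  let ⟨g, hg, hgab⟩ := hb
  ⟨g, h hg, hgab⟩

lemma IsBlock.shift_iff {𝒢 : Set (List (Fin d))} {x : FullShift d} {a b : ℤ} (n : ℕ) :
    IsBlock 𝒢 ((shift d)^[n] x) a b ↔ IsBlock 𝒢 x (a + n) (b + n) := by
  unfold IsBlock
  simp only [iterate_shift_apply]
  refine exists_congr fun g => and_congr_right fun _ => and_congr ?_ ?_
  · constructor <;> intro h <;> linarith
  · refine forall₂_congr fun l hl => ?_
    rw [show a + (l : ℤ) + n = a + n + l by ring]

lemma IsParsing.mono {𝒢 ℋ : Set (List (Fin d))} (h : 𝒢 ⊆ ℋ) {x : FullShift d} {p : ℤ → ℤ}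
    (hp : IsParsing 𝒢 x p) : IsParsing ℋ x p :=
  ⟨hp.1, fun j => IsBlock.mono h (hp.2 j)⟩

lemma IsParsing.of_iterate_shift {𝒢 : Set (List (Fin d))} {x : FullShift d} {q : ℤ → ℤ} {n : ℕ}
    (hq : IsParsing 𝒢 ((shift d)^[n] x) q) : IsParsing 𝒢 x fun j => q j + n :=
  ⟨fun i j hij => by simpa using hq.1 hij, fun j => (IsBlock.shift_iff n).1 (hq.2 j)⟩

lemma IsParsing.iterate_shift {𝒢 : Set (List (Fin d))} {x : FullShift d} {p : ℤ → ℤ} (n : ℕ)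
    (hp : IsParsing 𝒢 x p) : IsParsing 𝒢 ((shift d)^[n] x) fun j => p j - n :=
  ⟨fun i j hij => by simpa using hp.1 hij, fun j =>
    (IsBlock.shift_iff n).2 (by simpa [IsBlock] using hp.2 j)⟩

lemma Xseq_mono {𝒢 ℋ : Set (List (Fin d))} (h : 𝒢 ⊆ ℋ) : Xseq 𝒢 ⊆ Xseq ℋ :=
  fun _ ⟨p, hp⟩ => ⟨p, hp.mono h⟩

lemma codedShift_mono {𝒢 ℋ : Set (List (Fin d))} (h : 𝒢 ⊆ ℋ) :
    codedShift 𝒢 ⊆ codedShift ℋ :=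
  closure_mono (Xseq_mono h)

lemma mapsTo_shift_Xseq (𝒢 : Set (List (Fin d))) :
    Set.MapsTo (shift d) (Xseq 𝒢) (Xseq 𝒢) :=
  fun _ ⟨_, hp⟩ => ⟨_, hp.iterate_shift 1⟩

lemma mapsTo_shift_codedShift (𝒢 : Set (List (Fin d))) :
    Set.MapsTo (shift d) (codedShift 𝒢) (codedShift 𝒢) :=
  (mapsTo_shift_Xseq 𝒢).closure continuous_shift

lemma exists_mem_block {p : ℤ → ℤ} (hp : StrictMono p) (i : ℤ) :
    ∃ j, p j ≤ i ∧ i < p (j + 1) := by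
  have hup : ∀ n : ℕ, p 0 + n ≤ p n := by
    intro n
    induction n with
    | zero => simp
    | succ n ih =>
      have := hp (show (n : ℤ) < ((n + 1 : ℕ) : ℤ) by push_cast; linarith)
      push_cast at this ⊢
      linarith
  have hdown : ∀ n : ℕ, p (-n) ≤ p 0 - n := by
    intro n
    induction n with
    | zero => simp
    | succ n ih =>
      have := hp (show -((n + 1 : ℕ) : ℤ) < -(n : ℤ) by push_cast; linarith)
      push_cast at this ⊢
      linarith
  obtain ⟨j, hj, hmax⟩ := Int.exists_greatest_of_bdd (P := fun j => p j ≤ i)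
    ⟨((i - p 0).toNat : ℤ), fun z hz => by
      by_contra hlt
      have h1 := hp (not_le.1 hlt)
      have h2 := hup (i - p 0).toNat
      have h3 := Int.self_le_toNat (i - p 0)
      linarith⟩
    ⟨-((p 0 - i).toNat : ℤ), by
      have h2 := hdown (p 0 - i).toNat
      have h3 := Int.self_le_toNat (p 0 - i)
      linarith⟩
  refine ⟨j, hj, ?_⟩
  by_contra h
  have := hmax _ (not_lt.1 h)
  linarith

lemma mem_block_unique {p : ℤ → ℤ} (hp : StrictMono p) {i j j' : ℤ} (h : p j ≤ i)
    (h' : i < p (j + 1)) (hj : p j' ≤ i) (hj' : i < p (j' + 1)) : j = j' := by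
  have h1 : j < j' + 1 := hp.lt_iff_lt.1 (h.trans_lt hj')
  have h2 : j' < j + 1 := hp.lt_iff_lt.1 (hj.trans_lt h')
  linarith

lemma succ_le_of_range_subset {p q : ℤ → ℤ} (hp : StrictMono p) (hq : StrictMono q)
    (h : Set.range p ⊆ Set.range q) {j j' : ℤ} (hj : p j = q j') :
    q (j' + 1) ≤ p (j + 1) := by
  obtain ⟨i, hi⟩ := h ⟨j + 1, rfl⟩
  have hlt : q j' < q i := by rw [hi, ← hj]; exact hp (by linarith)
  rw [← hi]
  exact hq.monotone (hq.lt_iff_lt.1 hlt)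

lemma succ_eq_of_range_eq {p q : ℤ → ℤ} (hp : StrictMono p) (hq : StrictMono q)
    (h : Set.range p = Set.range q) {j j' : ℤ} (hj : p j = q j') :
    p (j + 1) = q (j' + 1) :=
  le_antisymm (succ_le_of_range_subset hq hp h.ge hj.symm)
    (succ_le_of_range_subset hp hq h.le hj)

lemma le_of_range_subset {p q : ℤ → ℤ} (hq : StrictMono q)
    (h : Set.range p ⊆ Set.range q) (hp0 : p 0 ≤ 0) (hq1 : 0 < q 1) : p 0 ≤ q 0 := by
  obtain ⟨i, hi⟩ := h ⟨0, rfl⟩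
  have : i < 0 + 1 := hq.lt_iff_lt.1 (by rw [hi]; simpa using hp0.trans_lt hq1)
  rw [← hi]
  exact hq.monotone (by linarith)

lemma eq_of_range_eq {p q : ℤ → ℤ} (hp : StrictMono p) (hq : StrictMono q)
    (h : Set.range p = Set.range q) (hp0 : p 0 ≤ 0) (hp1 : 0 < p 1) (hq0 : q 0 ≤ 0)
    (hq1 : 0 < q 1) : p = q := by
  have h0 : p 0 = q 0 :=
    le_antisymm (le_of_range_subset hq h.le hp0 hq1) (le_of_range_subset hp h.ge hq0 hp1)
  funext j
  induction j using Int.induction_on with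
  | zero => exact h0
  | succ i ih => exact succ_eq_of_range_eq hp hq h ih
  | pred i ih =>
    obtain ⟨i', hi'⟩ := h.le ⟨-i - 1, rfl⟩
    have hs := succ_eq_of_range_eq hp hq h hi'.symm
    rw [sub_add_cancel, ih] at hs
    have := hq.injective hs
    rw [← hi', this]
    congr 1
    ring

/-- The points of `Xseq 𝒢` whose blocks meeting `[-k, k]` all belong to `ℋ`. -/
def cleanSet (𝒢 ℋ : Set (List (Fin d))) (k : ℕ) : Set (FullShift d) :=
  {x | ∃ p, IsParsing 𝒢 x p ∧ ∀ j, -(k : ℤ) < p (j + 1) → p j ≤ k →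
    IsBlock ℋ x (p j) (p (j + 1))}

lemma isBlock_of_iterate_shift_mem_cleanSet {𝒢 ℋ : Set (List (Fin d))} (hU : UniqueRep 𝒢)
    {k n : ℕ} {x : FullShift d} {p : ℤ → ℤ} (hp : IsParsing 𝒢 x p)
    (hx : (shift d)^[n] x ∈ cleanSet 𝒢 ℋ k) {j : ℤ} (h1 : (n : ℤ) - k < p (j + 1))
    (h2 : p j ≤ n + k) : IsBlock ℋ x (p j) (p (j + 1)) := by
  obtain ⟨q, hq, hclean⟩ := hx
  have hq' := hq.of_iterate_shift
  have hr := hU x _ _ hp hq'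
  obtain ⟨j', hj'⟩ := hr.le ⟨j, rfl⟩
  have hs := succ_eq_of_range_eq hp.1 hq'.1 hr hj'.symm
  dsimp only at hj' hs
  have := (IsBlock.shift_iff n).1 (hclean j' (by linarith) (by linarith))
  rwa [hj', ← hs] at this

lemma measurableSet_isBlock (𝒢 : Set (List (Fin d))) (j : ℤ) :
    MeasurableSet {y : FullShift d × (ℤ → ℤ) | IsBlock 𝒢 y.1 (y.2 j) (y.2 (j + 1))} := by
  have hp : ∀ i : ℤ, Measurable fun y : FullShift d × (ℤ → ℤ) => y.2 i := fun i =>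
    (measurable_pi_apply i).comp measurable_snd
  have hx : ∀ (l : ℕ) (a : Fin d),
      MeasurableSet {y : FullShift d × (ℤ → ℤ) | y.1 (y.2 j + l) = a} := by
    intro l a
    have : {y : FullShift d × (ℤ → ℤ) | y.1 (y.2 j + l) = a} =
        ⋃ n : ℤ, {y | y.2 j = n} ∩ {y | y.1 (n + l) = a} := by
      ext y
      simp
    rw [this]
    have hxn : ∀ n : ℤ, Measurable fun y : FullShift d × (ℤ → ℤ) => y.1 n := fun n =>
      (measurable_pi_apply n).comp measurable_fst
    exact MeasurableSet.iUnion fun n => ((hp j) (measurableSet_singleton n)).inter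
      (hxn (n + l) (measurableSet_singleton a))
  have : {y : FullShift d × (ℤ → ℤ) | IsBlock 𝒢 y.1 (y.2 j) (y.2 (j + 1))} =
      ⋃ g ∈ 𝒢, {y : FullShift d × (ℤ → ℤ) | y.2 (j + 1) = y.2 j + (g.length : ℤ)} ∩
        ⋂ (l : ℕ) (hl : l < g.length), {y | y.1 (y.2 j + l) = g[l]} := by
    ext y
    simp only [IsBlock, Set.mem_ofPred_eq, Set.mem_iUnion, Set.mem_inter_iff, Set.mem_iInter,
      exists_prop]
  rw [this]
  refine MeasurableSet.biUnion 𝒢.to_countable fun g _ => MeasurableSet.inter ?_ ?_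
  · exact measurableSet_eq_fun (hp _) ((hp j).add_const _)
  · exact MeasurableSet.iInter fun l => MeasurableSet.iInter fun hl => hx l _

lemma measurableSet_cleanSet {𝒢 : Set (List (Fin d))} (hU : UniqueRep 𝒢)
    (ℋ : Set (List (Fin d))) (k : ℕ) : MeasurableSet (cleanSet 𝒢 ℋ k) := by
  have hp : ∀ i : ℤ, Measurable fun y : FullShift d × (ℤ → ℤ) => y.2 i := fun i =>
    (measurable_pi_apply i).comp measurable_snd
  let R : Set (FullShift d × (ℤ → ℤ)) :=
    ((⋂ j : ℤ, {y | y.2 j < y.2 (j + 1)}) ∩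
      ⋂ j : ℤ, {y | IsBlock 𝒢 y.1 (y.2 j) (y.2 (j + 1))}) ∩
    ({y | y.2 0 ≤ 0} ∩ {y | 0 < y.2 1}) ∩
    ⋂ j : ℤ, ({y | -(k : ℤ) < y.2 (j + 1)} ∩ {y | y.2 j ≤ k})ᶜ ∪
      {y | IsBlock ℋ y.1 (y.2 j) (y.2 (j + 1))}
  have hparse : ∀ y ∈ R, IsParsing 𝒢 y.1 y.2 := by
    intro y hy
    exact ⟨strictMono_int_of_lt_succ fun j => Set.mem_iInter.1 hy.1.1.1 j,
      fun j => Set.mem_iInter.1 hy.1.1.2 j⟩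
  have hR : MeasurableSet R := by
    refine (((MeasurableSet.iInter fun j => measurableSet_lt (hp _) (hp _)).inter
      (MeasurableSet.iInter fun j => measurableSet_isBlock 𝒢 j)).inter
      ((measurableSet_le (hp _) measurable_const).inter
        (measurableSet_lt measurable_const (hp _)))).inter
      (MeasurableSet.iInter fun j => ?_)
    exact ((measurableSet_lt measurable_const (hp _)).inter
      (measurableSet_le (hp _) measurable_const)).compl.union (measurableSet_isBlock ℋ j)
  have hinj : Set.InjOn Prod.fst R := by
    rintro ⟨x, p⟩ hp ⟨x', q⟩ hq (rfl : x = x')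
    have hpp := hparse _ hp
    have hqq := hparse _ hq
    exact Prod.ext rfl (eq_of_range_eq hpp.1 hqq.1 (hU x p q hpp hqq) hp.1.2.1 hp.1.2.2
      hq.1.2.1 hq.1.2.2)
  have himage : cleanSet 𝒢 ℋ k = Prod.fst '' R := by
    ext x
    constructor
    · rintro ⟨p, hpar, hcl⟩
      obtain ⟨j, hj, hj'⟩ := exists_mem_block hpar.1 0
      refine ⟨(x, fun i => p (i + j)), ⟨⟨⟨?_, ?_⟩, ?_, ?_⟩, ?_⟩, rfl⟩
      · exact Set.mem_iInter.2 fun i => hpar.1 (by linarith)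
      · refine Set.mem_iInter.2 fun i => ?_
        have := hpar.2 (i + j)
        rwa [show i + j + 1 = i + 1 + j by ring] at this
      · simpa using hj
      · simpa [add_comm] using hj'
      · refine Set.mem_iInter.2 fun i => ?_
        by_cases h : -(k : ℤ) < p (i + 1 + j) ∧ p (i + j) ≤ k
        · refine Or.inr ?_
          have := hcl (i + j)
          rw [show i + j + 1 = i + 1 + j by ring] at this
          exact this h.1 h.2
        · exact Or.inl h
    · rintro ⟨⟨x, p⟩, hy, rfl⟩
      refine ⟨p, hparse _ hy, fun j h1 h2 => ?_⟩
      exact (Set.mem_iInter.1 hy.2 j).resolve_left fun h => h ⟨h1, h2⟩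
  rw [himage]
  exact hR.image_of_measurable_injOn measurable_fst hinj

lemma cleanSet_subset_Xseq (𝒢 ℋ : Set (List (Fin d))) (k : ℕ) : cleanSet 𝒢 ℋ k ⊆ Xseq 𝒢 :=
  fun _ ⟨p, hp, _⟩ => ⟨p, hp⟩

lemma measurableSet_Xseq {𝒢 : Set (List (Fin d))} (hU : UniqueRep 𝒢) :
    MeasurableSet (Xseq 𝒢) := by
  have : Xseq 𝒢 = cleanSet 𝒢 𝒢 0 :=
    Set.Subset.antisymm (fun _ ⟨p, hp⟩ => ⟨p, hp, fun j _ _ => hp.2 j⟩)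
      (cleanSet_subset_Xseq _ _ _)
  rw [this]
  exact measurableSet_cleanSet hU _ _

lemma cleanSet_mono {𝒢 ℋ ℋ' : Set (List (Fin d))} (h : ℋ ⊆ ℋ') (k : ℕ) :
    cleanSet 𝒢 ℋ k ⊆ cleanSet 𝒢 ℋ' k :=
  fun _ ⟨p, hp, hc⟩ => ⟨p, hp, fun j h1 h2 => (hc j h1 h2).mono h⟩

lemma iUnion_cleanSet (G : ℕ → List (Fin d)) (k : ℕ) :
    ⋃ m : ℕ, cleanSet (Set.range G) (G '' {i | i < m}) k = Xseq (Set.range G) := by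
  refine Set.Subset.antisymm (Set.iUnion_subset fun m => cleanSet_subset_Xseq _ _ _) ?_
  rintro x ⟨p, hp⟩
  obtain ⟨a, ha, -⟩ := exists_mem_block hp.1 (-k : ℤ)
  obtain ⟨b, -, hb⟩ := exists_mem_block hp.1 (k : ℤ)
  have hidx : ∀ j, ∃ i, IsBlock {G i} x (p j) (p (j + 1)) := by
    intro j
    obtain ⟨_, ⟨i, rfl⟩, h⟩ := hp.2 j
    exact ⟨i, G i, rfl, h⟩
  choose idx hidx using hidx
  refine Set.mem_iUnion.2 ⟨(Finset.Icc a b).sup idx + 1, p, hp, fun j h1 h2 => ?_⟩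
  refine (hidx j).mono (Set.singleton_subset_iff.2 (Set.mem_image_of_mem G ?_))
  have hja : a < j + 1 := hp.1.lt_iff_lt.1 (ha.trans_lt h1)
  have hjb : j < b + 1 := hp.1.lt_iff_lt.1 (h2.trans_lt hb)
  exact Nat.lt_succ_of_le (Finset.le_sup (f := idx) (Finset.mem_Icc.2 ⟨by linarith, by linarith⟩))

end Parsing

section Surgery

variable {d : ℕ}

lemma exists_int_primitive (f : ℤ → ℤ) : ∃ s : ℤ → ℤ, s 0 = 0 ∧ ∀ i, s (i + 1) = s i + f i := by
  refine ⟨fun i => ∑ j ∈ Finset.Ico 0 i, f j - ∑ j ∈ Finset.Ico i 0, f j, by simp, fun i => ?_⟩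
  rcases le_or_gt 0 i with hi | hi
  · have h : Finset.Ico 0 (i + 1) = insert i (Finset.Ico 0 i) := by
      ext j; simp only [Finset.mem_Ico, Finset.mem_insert]; omega
    simp only [h, Finset.Ico_eq_empty_of_le hi, Finset.Ico_eq_empty_of_le (by omega : 0 ≤ i + 1)]
    rw [Finset.sum_insert (by simp)]
    simp [add_comm]
  · have h : Finset.Ico i 0 = insert i (Finset.Ico (i + 1) 0) := by
      ext j; simp only [Finset.mem_Ico, Finset.mem_insert]; omega
    simp only [h, Finset.Ico_eq_empty_of_le hi.le,
      Finset.Ico_eq_empty_of_le (by omega : i + 1 ≤ 0)]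
    rw [Finset.sum_insert (by simp)]
    simp

/-- Replacing every block outside `ℋ` by a fixed shortest word of `ℋ` turns a point of `Xseq 𝒢`
into a point of `Xseq ℋ`. Positions flagged by `drop` disappear, and the surviving position `i`
moves to `σ i`; letters near clean positions are unchanged. -/
lemma exists_surgery {𝒢 ℋ : Set (List (Fin d))} (hU : UniqueRep 𝒢) {g₀ : List (Fin d)}
    (hg₀ : g₀ ∈ ℋ) (hne : g₀ ≠ []) (hmin : ∀ g ∈ 𝒢, g₀.length ≤ g.length) (k : ℕ)
    {x : FullShift d} (hx : x ∈ Xseq 𝒢) :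
    ∃ x' ∈ Xseq ℋ, ∃ (σ : ℤ → ℤ) (drop : ℤ → Bool), σ 0 = 0 ∧
      (∀ i, σ (i + 1) = σ i + if drop i then 0 else 1) ∧
      ∀ n : ℕ, (shift d)^[n] x ∈ cleanSet 𝒢 ℋ k → ∀ l : ℤ, |l| ≤ k →
        drop (n + l) = false ∧ x' (σ (n + l)) = x (n + l) := by
  classical
  obtain ⟨p, hp⟩ := hx
  choose J hJ hJ' using exists_mem_block hp.1
  let good : ℤ → Prop := fun j => IsBlock ℋ x (p j) (p (j + 1))
  let len : ℤ → ℤ := fun j => if good j then p (j + 1) - p j else g₀.length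
  have hlen_pos : ∀ j, 0 < len j := by
    intro j
    by_cases h : good j
    · simpa [len, h] using hp.1 (show j < j + 1 by omega)
    · simpa [len, h, List.length_pos_iff] using hne
  have hlen_le : ∀ j, p j + len j ≤ p (j + 1) := by
    intro j
    by_cases h : good j
    · simp [len, h]
    · obtain ⟨g, hg, hgl, -⟩ := hp.2 j
      have := hmin g hg
      simp only [len, h, if_false]
      omega
  let drop : ℤ → Bool := fun i => decide (p (J i) + len (J i) ≤ i)
  have hdrop : ∀ j i, p j ≤ i → i < p (j + 1) → drop i = decide (p j + len j ≤ i) := by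
    intro j i h h'
    simp only [drop, mem_block_unique hp.1 (hJ i) (hJ' i) h h']
  obtain ⟨σ, hσ0, hσ⟩ := exists_int_primitive fun i => if drop i then 0 else 1
  have hσ_keep : ∀ (j : ℤ) (l : ℕ), (l : ℤ) ≤ len j → σ (p j + l) = σ (p j) + l := by
    intro j l
    induction l with
    | zero => simp
    | succ l ih =>
      intro hl
      push_cast at hl ⊢
      have h := hlen_le j
      rw [← add_assoc, hσ, ih (by omega), hdrop j _ (by omega) (by omega)]
      simp [not_le.2 (by omega : (l : ℤ) < len j), add_assoc]
  have hσ_drop : ∀ (j : ℤ) (l : ℕ), p j + len j + l ≤ p (j + 1) →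
      σ (p j + len j + l) = σ (p j) + len j := by
    intro j l
    induction l with
    | zero =>
      intro _
      have h := hσ_keep j (len j).toNat
      rw [Int.toNat_of_nonneg (hlen_pos j).le] at h
      simpa using h le_rfl
    | succ l ih =>
      intro hl
      push_cast at hl ⊢
      have h := hlen_pos j
      rw [← add_assoc, hσ, ih (by omega), hdrop j _ (by omega) (by omega)]
      simp
  have hσ_succ : ∀ j, σ (p (j + 1)) = σ (p j) + len j := by
    intro j
    have h := hσ_drop j (p (j + 1) - p j - len j).toNat
    have h2 := hlen_le j
    rw [Int.toNat_of_nonneg (by omega)] at h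
    rw [← h (by omega)]
    congr 1
    ring
  have hp' : StrictMono fun j => σ (p j) := strictMono_int_of_lt_succ fun j => by
    have := hlen_pos j
    rw [hσ_succ]
    omega
  choose J' hJ₁ hJ₂ using exists_mem_block hp'
  let x' : FullShift d := fun y =>
    if good (J' y) then x (p (J' y) + (y - σ (p (J' y))))
    else g₀.getD (y - σ (p (J' y))).toNat (x 0)
  have hx' : ∀ (j : ℤ) (l : ℕ), (l : ℤ) < len j →
      x' (σ (p j) + l) = if good j then x (p j + l) else g₀.getD l (x 0) := by
    intro j l hl
    have hj : J' (σ (p j) + l) = j :=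
      mem_block_unique hp' (hJ₁ _) (hJ₂ _) (by simp) (by rw [hσ_succ]; omega)
    simp only [x', hj, add_sub_cancel_left, Int.toNat_natCast]
  refine ⟨x', ⟨fun j => σ (p j), hp', fun j => ?_⟩, σ, drop, hσ0, hσ, ?_⟩
  · by_cases h : good j
    · obtain ⟨g, hg, hgl, hgx⟩ := h
      have h : good j := ⟨g, hg, hgl, hgx⟩
      have hl : len j = g.length := by simp [len, h, hgl]
      refine ⟨g, hg, (hσ_succ j).trans (by rw [hl]), fun l hlt => ?_⟩
      rw [hx' j l (by omega), if_pos h, hgx l hlt]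
    · have hl : len j = g₀.length := by simp [len, h]
      refine ⟨g₀, hg₀, (hσ_succ j).trans (by rw [hl]), fun l hlt => ?_⟩
      rw [hx' j l (by omega), if_neg h, List.getD_eq_getElem _ _ hlt]
  · intro n hn l hl
    have hl' := abs_le.1 hl
    set i : ℤ := n + l with hi
    have h1 := hJ i
    have h2 := hJ' i
    have hgood : good (J i) :=
      isBlock_of_iterate_shift_mem_cleanSet hU hp hn (by omega) (by omega)
    have hlen : len (J i) = p (J i + 1) - p (J i) := by simp [len, hgood]
    refine ⟨by simp only [drop, hlen]; simpa using h2, ?_⟩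
    have hcast : ((i - p (J i)).toNat : ℤ) = i - p (J i) := Int.toNat_of_nonneg (by omega)
    have hk := hσ_keep (J i) (i - p (J i)).toNat (by omega)
    have hv := hx' (J i) (i - p (J i)).toNat (by omega)
    rw [if_pos hgood] at hv
    rw [← hk, hcast] at hv
    simpa using hv

/-- The position to which the `i`-th letter is moved, read off from the code `t`. -/
def codePos (t : ℕ → Option (Fin d × Bool)) (i : ℕ) : ℕ :=
  ((Finset.range i).filter fun l => (t l).all fun a => !a.2).card

lemma codePos_congr {t t' : ℕ → Option (Fin d × Bool)} {i : ℕ} (h : ∀ l < i, t l = t' l) :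
    codePos t i = codePos t' i := by
  unfold codePos
  congr 1
  exact Finset.filter_congr fun l hl => by rw [h l (Finset.mem_range.1 hl)]

lemma codePos_le (t : ℕ → Option (Fin d × Bool)) (i : ℕ) : codePos t i ≤ i :=
  (Finset.card_filter_le _ _).trans (Finset.card_range i).le

/-- Number of visits of the first `n` iterates to the complement of the clean set. -/
def uncleanCount (C : Set (FullShift d)) (n : ℕ) (x : FullShift d) : ℝ :=
  birkhoff (Cᶜ.indicator 1) n x

open Classical in
lemma uncleanCount_eq_card (C : Set (FullShift d)) (n : ℕ) (x : FullShift d) :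
    uncleanCount C n x =
      ((Finset.range n).filter fun i => (shift d)^[i] x ∉ C).card := by
  rw [Finset.natCast_card_filter]
  simp [uncleanCount, birkhoff, Set.indicator_apply]

/-- Coding of a point of `Xseq 𝒢` by a point of `Xseq ℋ` and a sparse correction `t`. -/
lemma exists_code {𝒢 ℋ : Set (List (Fin d))} (hU : UniqueRep 𝒢) (hℋ : ℋ ⊆ 𝒢)
    {g₀ : List (Fin d)} (hg₀ : g₀ ∈ ℋ) (hne : g₀ ≠ [])
    (hmin : ∀ g ∈ 𝒢, g₀.length ≤ g.length) {φ : FullShift d → ℝ} {k : ℕ}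
    (hLC : ∀ x ∈ codedShift 𝒢, ∀ y ∈ codedShift 𝒢,
      (∀ i : ℤ, |i| ≤ (k : ℤ) → x i = y i) → φ x = φ y)
    {K : ℝ} (hK : ∀ x ∈ codedShift 𝒢, |φ x| ≤ K) (N : ℕ) {x : FullShift d}
    (hx : x ∈ Xseq 𝒢) :
    ∃ x' ∈ Xseq ℋ, ∃ t : ℕ → Option (Fin d × Bool),
      (∀ i, t i = none ↔ (shift d)^[i] x ∈ cleanSet 𝒢 ℋ k) ∧
      (∀ i, t i = none → x i = x' (codePos t i)) ∧
      (∀ i a, t i = some a → x i = a.1) ∧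
      birkhoff φ N x ≤ birkhoff φ N x' + 2 * K * uncleanCount (cleanSet 𝒢 ℋ k) N x := by
  classical
  set C := cleanSet 𝒢 ℋ k with hC
  obtain ⟨x', hx', σ, drop, hσ0, hσ, hclean⟩ := exists_surgery hU hg₀ hne hmin k hx
  let t : ℕ → Option (Fin d × Bool) := fun i =>
    if (shift d)^[i] x ∈ C then none else some (x i, drop i)
  have ht : ∀ i, ((t i).all fun a => !a.2) = !drop i := by
    intro i
    by_cases h : (shift d)^[i] x ∈ C
    · have := (hclean i h 0 (by simp)).1
      rw [add_zero] at this
      simp [t, h, this]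
    · simp [t, h]
  have hpos : ∀ i : ℕ, σ i = codePos t i := by
    intro i
    induction i with
    | zero => simp [hσ0, codePos]
    | succ i ih =>
      push_cast
      rw [hσ, ih, codePos, codePos, Finset.range_add_one, Finset.filter_insert, ht]
      cases drop i <;> simp
  have hmono : Monotone σ := monotone_int_of_le_succ fun i => by
    rw [hσ]
    split_ifs <;> simp
  have hXx : x ∈ codedShift 𝒢 := subset_closure hx
  have hXx' : x' ∈ codedShift 𝒢 := subset_closure (Xseq_mono hℋ hx')
  have hinv := mapsTo_shift_codedShift 𝒢
  refine ⟨x', hx', t, ?_, ?_, ?_, ?_⟩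
  · intro i
    by_cases h : (shift d)^[i] x ∈ C <;> simp [t, h]
  · intro i hi
    have h : (shift d)^[i] x ∈ C := by
      by_contra h
      simp [t, h] at hi
    have := (hclean i h 0 (by simp)).2
    rw [add_zero] at this
    rw [← hpos, this]
  · intro i a hi
    by_cases h : (shift d)^[i] x ∈ C
    · simp [t, h] at hi
    · simp only [t, h, if_false, Option.some.injEq] at hi
      rw [← hi]
  · let A := (Finset.range N).filter fun i => (shift d)^[i] x ∈ C
    let B := (Finset.range N).filter fun i => (shift d)^[i] x ∉ C
    have hcardB : uncleanCount C N x = (B.card : ℝ) := uncleanCount_eq_card C N x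
    have hcard : A.card + B.card = N := by
      simpa using Finset.card_filter_add_card_filter_not (s := Finset.range N)
        fun i => (shift d)^[i] x ∈ C
    have hinj : Set.InjOn (codePos t) A := by
      have key : ∀ i ∈ A, ∀ j, i < j → codePos t i < codePos t j := by
        intro i hi j hij
        have h1 := (hclean i (Finset.mem_filter.1 hi).2 0 (by simp)).1
        rw [add_zero] at h1
        have h2 := hmono (show (i : ℤ) + 1 ≤ j by exact_mod_cast hij)
        rw [hσ, h1, hpos, hpos] at h2
        simp at h2
        omega
      intro i hi j hj hij
      rcases lt_trichotomy i j with h | h | h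
      · exact absurd hij (key i hi j h).ne
      · exact h
      · exact absurd hij (key j hj i h).ne'
    have hsub : A.image (codePos t) ⊆ Finset.range N := by
      intro n hn
      obtain ⟨i, hi, rfl⟩ := Finset.mem_image.1 hn
      exact Finset.mem_range.2
        ((codePos_le t i).trans_lt (Finset.mem_range.1 (Finset.mem_filter.1 hi).1))
    have hcardA : (Finset.range N \ A.image (codePos t)).card = B.card := by
      rw [Finset.card_sdiff_of_subset hsub, Finset.card_image_of_injOn hinj, Finset.card_range]
      omega
    have hφ : ∀ i ∈ A, φ ((shift d)^[i] x) = φ ((shift d)^[codePos t i] x') := by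
      intro i hi
      have hiC := (Finset.mem_filter.1 hi).2
      have hstep : ∀ l : ℕ, l ≤ k → σ (i + l) = σ i + l ∧ σ (i - l) = σ i - l := by
        intro l
        induction l with
        | zero => simp
        | succ l ih =>
          intro hl
          obtain ⟨e1, e2⟩ := ih (by omega)
          have a1 := (hclean i hiC l (by simpa using (by omega : l ≤ k))).1
          have a2 := (hclean i hiC (-((l + 1 : ℕ) : ℤ)) (by
            rw [abs_neg, Nat.abs_cast]; exact_mod_cast hl)).1
          have s1 := hσ (i + l)
          have s2 := hσ (i + -((l + 1 : ℕ) : ℤ))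
          rw [a1, e1] at s1
          rw [a2, show (i : ℤ) + -((l + 1 : ℕ) : ℤ) + 1 = i - l by push_cast; ring, e2] at s2
          refine ⟨?_, ?_⟩
          · push_cast
            rw [← add_assoc, s1]
            simp [add_assoc]
          · rw [sub_eq_add_neg]
            simp only [Bool.false_eq_true, if_false] at s2
            push_cast at s2 ⊢
            omega
      refine hLC _ (hinv.iterate i hXx) _ (hinv.iterate _ hXx') fun l hl => ?_
      rw [iterate_shift_apply, iterate_shift_apply, ← hpos, add_comm l, add_comm l,
        ← (hclean i hiC l hl).2]
      congr 1
      have hl' := abs_le.1 hl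
      rcases le_total 0 l with h0 | h0
      · have := (hstep l.toNat (by omega)).1
        rwa [Int.toNat_of_nonneg h0] at this
      · have := (hstep (-l).toNat (by omega)).2
        rwa [Int.toNat_of_nonneg (by omega), sub_neg_eq_add, sub_neg_eq_add] at this
    have e1 : birkhoff φ N x =
        ∑ i ∈ A, φ ((shift d)^[i] x) + ∑ i ∈ B, φ ((shift d)^[i] x) :=
      (Finset.sum_filter_add_sum_filter_not _ _ _).symm
    have e2 : birkhoff φ N x' = ∑ i ∈ Finset.range N \ A.image (codePos t), φ ((shift d)^[i] x')
        + ∑ i ∈ A, φ ((shift d)^[codePos t i] x') := by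
      rw [← Finset.sum_image (f := fun i => φ ((shift d)^[i] x')) hinj, Finset.sum_sdiff hsub]
      rfl
    have b1 : ∑ i ∈ B, φ ((shift d)^[i] x) ≤ B.card * K := by
      rw [← nsmul_eq_mul]
      exact Finset.sum_le_card_nsmul _ _ _ fun i _ =>
        (abs_le.1 (hK _ (hinv.iterate i hXx))).2
    have b2 : B.card * -K ≤
        ∑ i ∈ Finset.range N \ A.image (codePos t), φ ((shift d)^[i] x') := by
      rw [← hcardA, ← nsmul_eq_mul]
      exact Finset.card_nsmul_le_sum _ _ _ fun i _ =>
        (abs_le.1 (hK _ (hinv.iterate i hXx'))).1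
    rw [e1, e2, Finset.sum_congr rfl hφ, hcardB]
    linarith

end Surgery

section Comparison

variable {d : ℕ}

lemma sum_exp_le_Zfun_mul {𝒢 ℋ : Set (List (Fin d))} (hU : UniqueRep 𝒢) (hℋ : ℋ ⊆ 𝒢)
    {g₀ : List (Fin d)} (hg₀ : g₀ ∈ ℋ) (hne : g₀ ≠ [])
    (hmin : ∀ g ∈ 𝒢, g₀.length ≤ g.length) {φ : FullShift d → ℝ} {k : ℕ}
    (hLC : ∀ x ∈ codedShift 𝒢, ∀ y ∈ codedShift 𝒢,
      (∀ i : ℤ, |i| ≤ (k : ℤ) → x i = y i) → φ x = φ y)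
    {K : ℝ} (hK : ∀ x ∈ codedShift 𝒢, |φ x| ≤ K) (c : ℝ) (N : ℕ)
    (W : Finset (Fin N → Fin d)) (x : (Fin N → Fin d) → FullShift d)
    (hx : ∀ w ∈ W, x w ∈ Xseq 𝒢 ∧ x w ∈ cyl w) :
    ∑ w ∈ W, Real.exp (birkhoff φ N (x w) - c * uncleanCount (cleanSet 𝒢 ℋ k) N (x w)) ≤
      Zfun (codedShift ℋ) φ N * (1 + 2 * d * Real.exp (2 * K - c)) ^ N := by
  classical
  set C := cleanSet 𝒢 ℋ k with hC
  have hcode : ∀ w : Fin N → Fin d, ∃ (x' : FullShift d) (t : ℕ → Option (Fin d × Bool)),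
      w ∈ W → x' ∈ Xseq ℋ ∧ (∀ i, t i = none ↔ (shift d)^[i] (x w) ∈ C) ∧
      (∀ i, t i = none → x w i = x' (codePos t i)) ∧ (∀ i a, t i = some a → x w i = a.1) ∧
      birkhoff φ N (x w) ≤ birkhoff φ N x' + 2 * K * uncleanCount C N (x w) := by
    intro w
    by_cases hw : w ∈ W
    · obtain ⟨x', hx', t, h⟩ := exists_code hU hℋ hg₀ hne hmin hLC hK N (hx w hw).1
      exact ⟨x', t, fun _ => ⟨hx', h⟩⟩
    · exact ⟨x w, fun _ => none, fun h => absurd h hw⟩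
  choose x' t hcode using hcode
  let wt : Option (Fin d × Bool) → ℝ := fun o => if o = none then 1 else Real.exp (2 * K - c)
  have hwt_pos : ∀ o, 0 < wt o := fun o => by
    simp only [wt]
    split_ifs <;> positivity
  have hwt_sum : ∑ o, wt o = 1 + 2 * d * Real.exp (2 * K - c) := by
    simp [wt, Fintype.sum_option]
    ring
  let code : (Fin N → Fin d) → (Fin N → Fin d) × (Fin N → Option (Fin d × Bool)) := fun w =>
    (fun i => x' w ((i : ℕ) : ℤ), fun i => t w i)
  let F : (Fin N → Fin d) × (Fin N → Option (Fin d × Bool)) → ℝ := fun y =>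
    wordWeight (codedShift ℋ) φ y.1 * ∏ i, wt (y.2 i)
  have hF : ∀ y, 0 ≤ F y := fun y =>
    mul_nonneg (wordWeight_nonneg _) (Finset.prod_nonneg fun i _ => (hwt_pos _).le)
  have hinj : Set.InjOn code W := by
    intro u hu v hv huv
    obtain ⟨-, -, hu1, hu2, -⟩ := hcode u hu
    obtain ⟨-, -, hv1, hv2, -⟩ := hcode v hv
    have hX : ∀ i, i < N → x' u (i : ℤ) = x' v (i : ℤ) := fun i hi =>
      congrFun (congrArg Prod.fst huv) ⟨i, hi⟩
    have hT : ∀ i, i < N → t u i = t v i := fun i hi =>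
      congrFun (congrArg Prod.snd huv) ⟨i, hi⟩
    funext i
    rw [← (hx u hu).2 i, ← (hx v hv).2 i]
    have hi := i.2
    rcases ho : t u i with _ | a
    · rw [hu1 i ho, hv1 i ((hT i hi).symm.trans ho),
        codePos_congr fun l hl => hT l (hl.trans hi)]
      exact hX _ ((codePos_le _ _).trans_lt hi)
    · rw [hu2 i a ho, hv2 i a ((hT i hi).symm.trans ho)]
  have hterm : ∀ w ∈ W, Real.exp (birkhoff φ N (x w) - c * uncleanCount C N (x w)) ≤
      F (code w) := by
    intro w hw
    obtain ⟨h1, h2, -, -, h3⟩ := hcode w hw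
    have hprod : ∏ i : Fin N, wt (t w i) =
        Real.exp ((2 * K - c) * uncleanCount C N (x w)) := by
      rw [Fin.prod_univ_eq_prod_range (fun i => wt (t w i)) N, uncleanCount_eq_card, mul_comm,
        Real.exp_nat_mul, ← Finset.prod_const, Finset.prod_filter]
      refine Finset.prod_congr rfl fun i _ => ?_
      simp only [wt, h2 i]
      split_ifs <;> rfl
    have hKℋ : ∀ y ∈ codedShift ℋ, |φ y| ≤ K := fun y hy => hK y (codedShift_mono hℋ hy)
    simp only [F, code]
    rw [hprod]
    calc Real.exp (birkhoff φ N (x w) - c * uncleanCount C N (x w))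
        ≤ Real.exp (birkhoff φ N (x' w) + (2 * K - c) * uncleanCount C N (x w)) :=
          Real.exp_le_exp.2 (by linarith)
      _ = Real.exp (birkhoff φ N (x' w)) *
            Real.exp ((2 * K - c) * uncleanCount C N (x w)) := Real.exp_add _ _
      _ ≤ _ := mul_le_mul_of_nonneg_right
          (exp_birkhoff_le_wordWeight (mapsTo_shift_codedShift ℋ) hKℋ (subset_closure h1)
            fun _ => rfl) (Real.exp_pos _).le
  calc _ ≤ ∑ w ∈ W, F (code w) := Finset.sum_le_sum hterm
    _ = ∑ y ∈ W.image code, F y := (Finset.sum_image hinj).symm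
    _ ≤ ∑ y, F y :=
        Finset.sum_le_sum_of_subset_of_nonneg (Finset.subset_univ _) fun y _ _ => hF y
    _ = _ := by
        rw [← hwt_sum, Fintype.sum_pow, Zfun_eq_sum_wordWeight, Finset.sum_mul_sum,
          ← Finset.univ_product_univ, Finset.sum_product]

lemma integrable_birkhoff {μ : Measure (FullShift d)} (hμ : MeasurePreserving (shift d) μ μ)
    {f : FullShift d → ℝ} (hf : Integrable f μ) (n : ℕ) : Integrable (birkhoff f n) μ :=
  integrable_finsetSum _ fun k _ => (hμ.iterate k).integrable_comp_of_integrable hf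

lemma integral_birkhoff {μ : Measure (FullShift d)} (hμ : MeasurePreserving (shift d) μ μ)
    {f : FullShift d → ℝ} (hf : Integrable f μ) (n : ℕ) :
    ∫ x, birkhoff f n x ∂μ = n * ∫ x, f x ∂μ := by
  have hsum : ∫ x, birkhoff f n x ∂μ =
      ∑ k ∈ Finset.range n, ∫ x, f ((shift d)^[k] x) ∂μ :=
    integral_finsetSum _ fun k _ => (hμ.iterate k).integrable_comp_of_integrable hf
  rw [hsum]
  have : ∀ k, ∫ x, f ((shift d)^[k] x) ∂μ = ∫ x, f x ∂μ := by
    intro k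
    have hk := hμ.iterate k
    rw [← integral_map hk.measurable.aemeasurable
      (by rw [hk.map_eq]; exact hf.aestronglyMeasurable), hk.map_eq]
  simp [this]

/-- The main comparison: the free energy of a measure on `Xseq 𝒢` exceeds the pressure of the
subsystem generated by `ℋ` by an amount controlled by the measure of the unclean points. -/
lemma freeEnergy_le_pressure_add {𝒢 ℋ : Set (List (Fin d))} (hU : UniqueRep 𝒢) (hℋ : ℋ ⊆ 𝒢)
    {g₀ : List (Fin d)} (hg₀ : g₀ ∈ ℋ) (hne : g₀ ≠ [])
    (hmin : ∀ g ∈ 𝒢, g₀.length ≤ g.length) {φ : FullShift d → ℝ} {k : ℕ}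
    (hLC : ∀ x ∈ codedShift 𝒢, ∀ y ∈ codedShift 𝒢,
      (∀ i : ℤ, |i| ≤ (k : ℤ) → x i = y i) → φ x = φ y)
    {K : ℝ} (hK : ∀ x ∈ codedShift 𝒢, |φ x| ≤ K) {μ : Measure (FullShift d)}
    [IsProbabilityMeasure μ] (hμ : MeasurePreserving (shift d) μ μ) (hseq : μ (Xseq 𝒢)ᶜ = 0)
    (hφ : Integrable φ μ) (hX : (codedShift ℋ).Nonempty) (c : ℝ) :
    freeEnergy μ φ ≤ pressure (codedShift ℋ) φ +
      (c * μ.real (cleanSet 𝒢 ℋ k)ᶜ + Real.log (1 + 2 * d * Real.exp (2 * K - c))) := by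
  set C := cleanSet 𝒢 ℋ k with hC
  have hCm : MeasurableSet Cᶜ := (measurableSet_cleanSet hU ℋ k).compl
  have hKℋ : ∀ y ∈ codedShift ℋ, |φ y| ≤ K := fun y hy => hK y (codedShift_mono hℋ hy)
  have hone : Integrable (Cᶜ.indicator (1 : FullShift d → ℝ)) μ :=
    (integrable_const (1 : ℝ)).indicator hCm
  set L := Real.log (1 + 2 * d * Real.exp (2 * K - c)) with hL
  have hbound : ∀ n : ℕ, (1 / (n + 1 : ℝ)) *
      ∑ w : Fin (n + 1) → Fin d, Real.negMulLog (μ (cyl w)).toReal ≤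
      (1 / (n + 1 : ℝ)) * Real.log (Zfun (codedShift ℋ) φ (n + 1)) +
        (c * μ.real Cᶜ + L - ∫ x, φ x ∂μ) := by
    intro n
    have hunc : Integrable (uncleanCount C (n + 1)) μ := integrable_birkhoff hμ hone _
    have hint : Integrable (fun x => birkhoff φ (n + 1) x - c * uncleanCount C (n + 1) x) μ :=
      (integrable_birkhoff hμ hφ _).sub (hunc.const_mul c)
    obtain ⟨W, x, hW, hx, hle⟩ := exists_points_gibbs hint hseq (n + 1)
    have hlog := Real.log_le_log (Finset.sum_pos (fun w _ => Real.exp_pos _) hW)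
      (sum_exp_le_Zfun_mul hU hℋ hg₀ hne hmin hLC hK c (n + 1) W x hx)
    rw [Real.log_mul (Zfun_pos (mapsTo_shift_codedShift ℋ) hKℋ hX _).ne' (by positivity),
      Real.log_pow, ← hL] at hlog
    have hintC : ∫ y, uncleanCount C (n + 1) y ∂μ = ((n + 1 : ℕ) : ℝ) * μ.real Cᶜ := by
      rw [← integral_indicator_one hCm]
      exact integral_birkhoff hμ hone _
    rw [integral_sub (integrable_birkhoff hμ hφ _) (hunc.const_mul c),
      integral_const_mul, integral_birkhoff hμ hφ, hintC] at hle
    have h := hle.trans hlog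
    push_cast at h
    have hn : (0 : ℝ) < n + 1 := by positivity
    rw [one_div, inv_mul_le_iff₀ hn, mul_add, mul_inv_cancel_left₀ hn.ne']
    linarith
  have hlim := (tendsto_pressure (mapsTo_shift_codedShift ℋ) hKℋ hX).add_const
    (c * μ.real Cᶜ + L - ∫ x, φ x ∂μ)
  have hent : mEnt μ ≤ pressure (codedShift ℋ) φ + (c * μ.real Cᶜ + L - ∫ x, φ x ∂μ) := by
    rw [← hlim.liminf_eq]
    refine liminf_le_liminf (Eventually.of_forall hbound) ?_ hlim.isCoboundedUnder_ge
    refine isBoundedUnder_of ⟨0, fun n => mul_nonneg (by positivity)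
      (Finset.sum_nonneg fun w _ => Real.negMulLog_nonneg ENNReal.toReal_nonneg ?_)⟩
    exact ENNReal.toReal_le_of_le_ofReal zero_le_one (by simpa using prob_le_one)
  unfold freeEnergy
  linarith

/-- A potential depending on finitely many coordinates of points of `X` is continuous on `X`. -/
lemma continuousOn_of_locally_constant {X : Set (FullShift d)} {φ : FullShift d → ℝ} {k : ℕ}
    (hLC : ∀ x ∈ X, ∀ y ∈ X, (∀ i : ℤ, |i| ≤ (k : ℤ) → x i = y i) → φ x = φ y) :
    ContinuousOn φ X := by
  intro x hx
  have hnhds : ∀ᶠ y in 𝓝 x, ∀ i ∈ Finset.Icc (-(k : ℤ)) k, x i = y i := by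
    rw [Filter.eventually_all_finset]
    intro i _
    have hopen : IsOpen {y : FullShift d | x i = y i} :=
      (isOpen_discrete {a | x i = a}).preimage (continuous_apply i)
    exact hopen.mem_nhds rfl
  refine tendsto_const_nhds.congr' ?_
  filter_upwards [nhdsWithin_le_nhds hnhds, self_mem_nhdsWithin] with y hy hyX
  exact hLC x hx y hyX fun i hi => hy i (Finset.mem_Icc.2 (abs_le.1 hi))

lemma tendsto_unclean_measure {G : ℕ → List (Fin d)} (hU : UniqueRep (Set.range G)) (k : ℕ)
    {μ : Measure (FullShift d)} [IsProbabilityMeasure μ] (hseq : μ (Xseq (Set.range G)) = 1) :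
    Tendsto (fun m : ℕ => μ.real (cleanSet (Set.range G) (G '' {i | i < m}) k)ᶜ) atTop
      (𝓝 0) := by
  have hmono : Monotone fun m : ℕ => cleanSet (Set.range G) (G '' {i | i < m}) k :=
    fun m n hmn => cleanSet_mono (Set.image_mono fun i hi => lt_of_lt_of_le hi hmn) k
  have h := tendsto_measure_iUnion_atTop (μ := μ) hmono
  rw [iUnion_cleanSet, hseq] at h
  have h' := (ENNReal.tendsto_toReal ENNReal.one_ne_top).comp h
  have h'' := h'.const_sub 1
  rw [ENNReal.toReal_one, sub_self] at h''
  refine h''.congr fun m => ?_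
  rw [probReal_compl_eq_one_sub (measurableSet_cleanSet hU _ k)]
  rfl

lemma exists_log_lt (a K : ℝ) {ε : ℝ} (hε : 0 < ε) :
    ∃ c : ℝ, Real.log (1 + a * Real.exp (2 * K - c)) < ε := by
  have h1 : Tendsto (fun c : ℝ => Real.exp (2 * K - c)) atTop (𝓝 0) :=
    Real.tendsto_exp_atBot.comp (tendsto_const_nhds.add_atBot tendsto_neg_atTop_atBot)
  have h2 : Tendsto (fun c : ℝ => 1 + a * Real.exp (2 * K - c)) atTop (𝓝 1) := by
    simpa using (h1.const_mul a).const_add 1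
  have h3 := (Real.continuousAt_log one_ne_zero).tendsto.comp h2
  rw [Real.log_one] at h3
  exact (h3.eventually (gt_mem_nhds hε)).exists

lemma eventually_freeEnergy_le {G : ℕ → List (Fin d)} (hG : ∀ m, G m ≠ [])
    (hU : UniqueRep (Set.range G)) {φ : FullShift d → ℝ} {k : ℕ}
    (hLC : ∀ x ∈ codedShift (Set.range G), ∀ y ∈ codedShift (Set.range G),
      (∀ i : ℤ, |i| ≤ (k : ℤ) → x i = y i) → φ x = φ y)
    {μ : Measure (FullShift d)} (hμ : μ ∈ InvProb (codedShift (Set.range G)))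
    (hseq : μ (Xseq (Set.range G)) = 1) {ε : ℝ} (hε : 0 < ε) :
    ∀ᶠ m : ℕ in atTop,
      pressure (codedShift (G '' {i | i < m})) φ ≤ pressure (codedShift (Set.range G)) φ ∧
      freeEnergy μ φ ≤ pressure (codedShift (G '' {i | i < m})) φ + ε := by
  obtain ⟨hprob, hmap, hX⟩ := hμ
  have hpres : MeasurePreserving (shift d) μ μ := ⟨measurable_shift, hmap⟩
  have hclosed : IsClosed (codedShift (Set.range G)) := isClosed_closure
  have hcont := continuousOn_of_locally_constant hLC
  obtain ⟨K, hK⟩ := hclosed.isCompact.exists_bound_of_continuousOn hcont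
  have hφ : Integrable φ μ := by
    have h := hcont.integrableOn_compact (μ := μ) hclosed.isCompact
    have hae : ∀ᵐ x ∂μ, x ∈ codedShift (Set.range G) :=
      (prob_compl_eq_zero_iff hclosed.measurableSet).2 hX
    rwa [IntegrableOn, Measure.restrict_eq_self_of_ae_mem hae] at h
  have hnull : μ (Xseq (Set.range G))ᶜ = 0 :=
    (prob_compl_eq_zero_iff (measurableSet_Xseq hU)).2 hseq
  obtain ⟨x, hx⟩ : (Xseq (Set.range G)).Nonempty :=
    nonempty_of_measure_ne_zero (by rw [hseq]; exact one_ne_zero)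
  obtain ⟨i₀, hmin⟩ : ∃ i₀, ∀ i, (G i₀).length ≤ (G i).length := by
    exact ⟨Function.argmin fun i => (G i).length, fun i =>
      Function.argmin_le (fun i => (G i).length) i⟩
  obtain ⟨c, hc⟩ := exists_log_lt (2 * d : ℝ) K (half_pos hε)
  have hsmall := ((tendsto_unclean_measure hU k hseq).const_mul c).eventually
    (gt_mem_nhds (show c * 0 < ε / 2 by linarith))
  filter_upwards [hsmall, eventually_gt_atTop i₀] with m hm hi
  have hsub : G '' {i | i < m} ⊆ Set.range G := Set.image_subset_range _ _
  have hmem : G i₀ ∈ G '' {i | i < m} := Set.mem_image_of_mem G hi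
  have hmin' : ∀ g ∈ Set.range G, (G i₀).length ≤ g.length := by
    rintro _ ⟨i, rfl⟩
    exact hmin i
  obtain ⟨x', hx', -⟩ := exists_surgery hU hmem (hG i₀) hmin' k hx
  have hne : (codedShift (G '' {i | i < m})).Nonempty := ⟨x', subset_closure hx'⟩
  refine ⟨pressure_mono (codedShift_mono hsub) (mapsTo_shift_codedShift _)
    (mapsTo_shift_codedShift _) hK hne, ?_⟩
  have := freeEnergy_le_pressure_add hU hsub hmem (hG i₀) hmin' hLC hK hpres hnull hφ hne c
  linarith

end Comparison

/-- for a coded shift with unique representation and a locally constant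
potential having an equilibrium state with full measure on `X_seq`, the pressure equals
`P_seq(φ)` and is the limit of the pressures of the finitely generated approximations. -/
theorem statement1 {d : ℕ} (hd : 2 ≤ d) (G : ℕ → List (Fin d)) (hG : ∀ m, G m ≠ [])
    (hU : UniqueRep (Set.range G)) (φ : FullShift d → ℝ) (k : ℕ)
    (hLC : ∀ x ∈ codedShift (Set.range G), ∀ y ∈ codedShift (Set.range G),
      (∀ i : ℤ, |i| ≤ (k : ℤ) → x i = y i) → φ x = φ y)
    (μφ : Measure (FullShift d))
    (hES : IsEqState (codedShift (Set.range G)) φ μφ)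
    (hseq : μφ (Xseq (Set.range G)) = 1) :
    pressure (codedShift (Set.range G)) φ
        = PseqOf (codedShift (Set.range G)) (Xseq (Set.range G)) φ ∧
      Tendsto (fun m : ℕ => pressure (codedShift (G '' {i | i < m})) φ) atTop
        (𝓝 (pressure (codedShift (Set.range G)) φ)) := by
  have key := fun (μ : Measure (FullShift d)) hμ hs (ε : ℝ) (hε : 0 < ε) =>
    eventually_freeEnergy_le (μ := μ) hG hU hLC hμ hs hε
  have hle : ∀ μ ∈ InvProb (codedShift (Set.range G)), μ (Xseq (Set.range G)) = 1 →
      freeEnergy μ φ ≤ pressure (codedShift (Set.range G)) φ := fun μ hμ hs =>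
    le_of_forall_pos_le_add fun ε hε =>
      let ⟨_, h1, h2⟩ := (key μ hμ hs ε hε).exists
      h2.trans (by linarith)
  constructor
  · have hgreatest : IsGreatest {r | ∃ μ ∈ InvProb (codedShift (Set.range G)),
        μ (Xseq (Set.range G)) = 1 ∧ r = freeEnergy μ φ}
        (pressure (codedShift (Set.range G)) φ) := by
      refine ⟨⟨μφ, hES.1, hseq, hES.2.symm⟩, ?_⟩
      rintro _ ⟨μ, hμ, hs, rfl⟩
      exact hle μ hμ hs
    exact hgreatest.csSup_eq.symm
  · refine tendsto_order.2 ⟨fun a ha => ?_, fun a ha => ?_⟩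
    · filter_upwards [key μφ hES.1 hseq _ (half_pos (sub_pos.2 ha))] with m hm
      have := hm.2
      rw [hES.2] at this
      linarith
    · filter_upwards [key μφ hES.1 hseq 1 one_pos] with m hm
      exact hm.1.trans_lt ha

end PaperStmt
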